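/- For every positive integer n, the distributions of depth and drp agree on the alternating group: ∑_{π ∈ 𝔖_n, sign(π)=1} q^{depth(π)} = ∑_{π ∈ 𝔖_n, sign(π)=1} q^{drp(π)} as polynomials in q over the integers, and likewise ∑_{π ∈ 𝔖_n, sign(π)=−1} q^{depth(π)} = ∑_{π ∈ 𝔖_n, sign(π)=−1} q^{drp(π)}. -/

import Mathlib

open Finset

/-- The one-line notation value of `π` at position `k ∈ {1,…,n}`:
`oneLine π k = π(k)` with `1`-indexed positions and values. -/
def oneLine {n : ℕ} (π : Equiv.Perm (Fin n)) (k : ℕ) : ℕ :=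
  if h : k - 1 < n then ((π ⟨k - 1, h⟩ : Fin n) : ℕ) + 1 else k

/-- `SUC(π) = {i ∈ {1,…,n-1} : π(i+1) = π(i)+1}` (position set). -/
def SUC {n : ℕ} (π : Equiv.Perm (Fin n)) : Finset ℕ :=
  (Finset.Icc 1 (n - 1)).filter (fun i => oneLine π (i + 1) = oneLine π i + 1)

/-- `FIX(π) = {i ∈ {1,…,n-1} : π(i) = i}` (position set). -/
def FIX {n : ℕ} (π : Equiv.Perm (Fin n)) : Finset ℕ :=
  (Finset.Icc 1 (n - 1)).filter (fun i => oneLine π i = i)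

/-- `Asc₂(π) = {π(i+1) : i ∈ {1,…,n-1}, π(i+1) ≥ π(i)+2}` (value set). -/
def Asc2 {n : ℕ} (π : Equiv.Perm (Fin n)) : Finset ℕ :=
  ((Finset.Icc 1 (n - 1)).filter (fun i => oneLine π i + 2 ≤ oneLine π (i + 1))).image
    (fun i => oneLine π (i + 1))

/-- `Des(π) = {π(i+1) : i ∈ {1,…,n-1}, π(i) > π(i+1)}` (value set). -/
def DesSet {n : ℕ} (π : Equiv.Perm (Fin n)) : Finset ℕ :=
  ((Finset.Icc 1 (n - 1)).filter (fun i => oneLine π (i + 1) < oneLine π i)).image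
    (fun i => oneLine π (i + 1))

/-- `Suc(π) = {π(i+1) : i ∈ {1,…,n-1}, π(i+1) = π(i)+1}` (value set). -/
def SucSet {n : ℕ} (π : Equiv.Perm (Fin n)) : Finset ℕ :=
  ((Finset.Icc 1 (n - 1)).filter (fun i => oneLine π (i + 1) = oneLine π i + 1)).image
    (fun i => oneLine π (i + 1))

/-- `Aexc(π) = {π(i) : i ∈ {2,…,n}, π(i) < i}` (value set). -/
def Aexc {n : ℕ} (π : Equiv.Perm (Fin n)) : Finset ℕ :=
  ((Finset.Icc 2 n).filter (fun i => oneLine π i < i)).image (fun i => oneLine π i)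

/-- `Êxc(π) = {π(i) : i ∈ {2,…,n}, π(i) > i}` (value set). -/
def ExcHat {n : ℕ} (π : Equiv.Perm (Fin n)) : Finset ℕ :=
  ((Finset.Icc 2 n).filter (fun i => i < oneLine π i)).image (fun i => oneLine π i)

/-- `F̂ix(π) = {π(i) : i ∈ {2,…,n}, π(i) = i}` (value set). -/
def FixHat {n : ℕ} (π : Equiv.Perm (Fin n)) : Finset ℕ :=
  ((Finset.Icc 2 n).filter (fun i => oneLine π i = i)).image (fun i => oneLine π i)

/-- `depth(π) = ∑_{i : π(i) > i} (π(i) − i)`. -/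
def depthStat {n : ℕ} (π : Equiv.Perm (Fin n)) : ℕ :=
  ∑ i ∈ (Finset.Icc 1 n).filter (fun i => i < oneLine π i), (oneLine π i - i)

/-- `drp(π) = ∑_{i ∈ {1,…,n-1} : π(i) > π(i+1)} (π(i) − π(i+1))`. -/
def drpStat {n : ℕ} (π : Equiv.Perm (Fin n)) : ℕ :=
  ∑ i ∈ (Finset.Icc 1 (n - 1)).filter (fun i => oneLine π (i + 1) < oneLine π i),
    (oneLine π i - oneLine π (i + 1))

/-- `exc(π) = |{i ∈ {1,…,n} : π(i) > i}|`. -/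
def excNum {n : ℕ} (π : Equiv.Perm (Fin n)) : ℕ :=
  ((Finset.Icc 1 n).filter (fun i => i < oneLine π i)).card

/-- `nexc(π) = |{i ∈ {1,…,n} : π(i) < i}|`. -/
def nexcNum {n : ℕ} (π : Equiv.Perm (Fin n)) : ℕ :=
  ((Finset.Icc 1 n).filter (fun i => oneLine π i < i)).card

/-- `des(π) = |{i ∈ {1,…,n-1} : π(i) > π(i+1)}|`. -/
def desNum {n : ℕ} (π : Equiv.Perm (Fin n)) : ℕ :=
  ((Finset.Icc 1 (n - 1)).filter (fun i => oneLine π (i + 1) < oneLine π i)).card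

/-- `asc(π) = |{i ∈ {1,…,n-1} : π(i) < π(i+1)}|`. -/
def ascNum {n : ℕ} (π : Equiv.Perm (Fin n)) : ℕ :=
  ((Finset.Icc 1 (n - 1)).filter (fun i => oneLine π i < oneLine π (i + 1))).card

/-- `inv(π) = |{(i,j) : 1 ≤ i < j ≤ n, π(i) > π(j)}|`. -/
def invNum {n : ℕ} (π : Equiv.Perm (Fin n)) : ℕ :=
  (((Finset.Icc 1 n) ×ˢ (Finset.Icc 1 n)).filter
    (fun p : ℕ × ℕ => p.1 < p.2 ∧ oneLine π p.2 < oneLine π p.1)).card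

/-!
Encode a permutation by the minima of its arcs, the arcs being either the pairs `{i, π(i)}` or the
pairs of neighbouring letters of the word `π(1) ⋯ π(n) ∞`. As `(a - b)⁺ + min a b = a`, the minima
add up to `1 + ⋯ + n` minus the depth in the first case and minus the drop in the second. Inserting
a new least letter into a permutation adds an arc with minimum `1`, and unless the letter is a
fixed point, respectively comes first, it also lowers the minimum of an old arc to `1`; each old arc
is so affected by exactly one insertion. Both encodings hence obey the same recursion, and depth and
drop are equidistributed on `𝔖ₙ`.

Exchanging the values `1` and `2` reverses the sign and, when `π(1) ∉ {1, 2}`, preserves both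
statistics; when `π(1) = 1` it raises both by one. So both signed generating functions are equal to
`(1 - q)ⁿ⁻¹`. Knowing the sum and the difference of the generating functions over the even and the
odd permutations, we know each of them.
-/

section

open Equiv

/-- The extension of a permutation of `Fin n` to `Fin (n + 1)` that fixes `0` and acts on the
successors. In one-line notation it puts a new least letter in front of the word. -/
def extendZero {n : ℕ} (e : Perm (Fin n)) : Perm (Fin (n + 1)) :=
  Perm.decomposeFin.symm (0, e)

@[simp]
theorem extendZero_apply_zero {n : ℕ} (e : Perm (Fin n)) : extendZero e 0 = 0 := by
  simp [extendZero]

@[simp]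
theorem extendZero_apply_succ {n : ℕ} (e : Perm (Fin n)) (i : Fin n) :
    extendZero e i.succ = (e i).succ := by
  simp [extendZero]

@[simp]
theorem sign_extendZero {n : ℕ} (e : Perm (Fin n)) : Perm.sign (extendZero e) = Perm.sign e := by
  simp [extendZero]

theorem extendZero_injective {n : ℕ} :
    Function.Injective (extendZero : Perm (Fin n) → Perm (Fin (n + 1))) := fun _ _ h =>
  (Prod.ext_iff.1 (Perm.decomposeFin.symm.injective h)).2

theorem extendZero_mul_bijective {n : ℕ} {c : Fin (n + 1) → Perm (Fin (n + 1))}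
    (hc : ∀ p, c p p = 0) :
    Function.Bijective fun x : Perm (Fin n) × Fin (n + 1) => extendZero x.1 * c x.2 := by
  rw [Fintype.bijective_iff_injective_and_card]
  refine ⟨?_, by simp [Fintype.card_perm, Nat.factorial_succ, mul_comm]⟩
  rintro ⟨e, p⟩ ⟨e', p'⟩ h
  replace h : extendZero e * c p = extendZero e' * c p' := h
  have hp : (extendZero e * c p) p = 0 := by simp [hc]
  have hp' : (extendZero e * c p) p' = 0 := by simp [h, hc]
  obtain rfl : p = p' := (extendZero e * c p).injective (hp.trans hp'.symm)
  rw [extendZero_injective (mul_right_cancel h)]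

theorem sum_filter_apply_zero_eq_zero {n : ℕ} {A : Type*} [AddCommMonoid A]
    (f : Perm (Fin (n + 1)) → A) : ∑ π with π 0 = 0, f π = ∑ e, f (extendZero e) := by
  refine (Finset.sum_bij (fun e _ => extendZero e) (by simp)
    (fun _ _ _ _ h => extendZero_injective h) (fun π hπ => ?_) (fun _ _ => rfl)).symm
  obtain ⟨⟨p, e⟩, rfl⟩ := Perm.decomposeFin.symm.surjective π
  obtain rfl : p = 0 := by simpa using hπ
  exact ⟨e, Finset.mem_univ e, rfl⟩

/-! ### Multisets of arc minima -/

theorem map_univ_val_update {ι α : Type*} [Fintype ι] [DecidableEq ι] [DecidableEq α] (f : ι → α)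
    (k : ι) (x : α) :
    univ.val.map (Function.update f k x) = x ::ₘ (univ.val.map f).erase (f k) := by
  have hk : (univ : Finset ι).val = k ::ₘ (univ.erase k).val := by
    rw [← insert_val_of_notMem (notMem_erase k _), insert_erase (mem_univ k)]
  rw [hk, Multiset.map_cons, Multiset.map_cons, Multiset.erase_cons_head, Function.update_self]
  congr 1
  exact Multiset.map_congr rfl fun i hi => Function.update_of_ne (ne_of_mem_erase hi) x f

/-- The multisets of arc minima that arise from `M` by inserting a new least letter `1`: all the old
minima grow by one, and a new minimum `1` either is added or is added and replaces an old one. -/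
def insertLeast (M : Multiset ℕ) : Multiset (Multiset ℕ) :=
  (1 ::ₘ M.map (· + 1)) ::ₘ M.map fun m => 1 ::ₘ 1 ::ₘ (M.map (· + 1)).erase (m + 1)

/-- The multisets of arc minima of all the permutations of `n` letters, with multiplicity,
generated by repeated insertion of a least letter. -/
def arcMinima : ℕ → Multiset (Multiset ℕ)
  | 0 => {0}
  | n + 1 => (arcMinima n).bind insertLeast

theorem insertLeast_map_univ_val {n : ℕ} (a : Fin n → ℕ) :
    insertLeast (univ.val.map a) = (univ : Finset (Fin (n + 1))).val.map fun p =>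
      1 ::ₘ univ.val.map fun i => if p = i.succ then 1 else a i + 1 := by
  have hupdate (k : Fin n) : (fun i => if k = i then 1 else a i + 1) =
      Function.update (fun i => a i + 1) k 1 := by
    ext i
    simp only [Function.update_apply, eq_comm]
  rw [Fin.univ_succ, cons_val, Multiset.map_cons, map_val, Multiset.map_map, insertLeast]
  simp only [Function.comp_def, Function.Embedding.coeFn_mk, Fin.succ_inj, hupdate,
    map_univ_val_update, Multiset.map_map, (Fin.succ_ne_zero _).symm, if_false]

theorem map_univ_val_eq_arcMinima (arc : ∀ {n : ℕ}, Perm (Fin n) → Fin n → ℕ)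
    (c : ∀ {n : ℕ}, Fin (n + 1) → Perm (Fin (n + 1)))
    (hc : ∀ {n : ℕ} (p : Fin (n + 1)), c p p = 0)
    (harc : ∀ {n : ℕ} (e : Perm (Fin n)) (p : Fin (n + 1)),
      univ.val.map (arc (extendZero e * c p)) =
        1 ::ₘ univ.val.map fun i => if p = i.succ then 1 else arc e i + 1) (n : ℕ) :
    univ.val.map (fun π : Perm (Fin n) => univ.val.map (arc π)) = arcMinima n := by
  induction n with
  | zero => rfl
  | succ n ih =>
    have huniv : (univ : Finset (Perm (Fin (n + 1)))).val = (univ : Finset (Perm (Fin n))).val.bind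
        fun e => univ.val.map fun p => extendZero e * c p := by
      rw [← Multiset.map_univ_val_equiv (Equiv.ofBijective _ (extendZero_mul_bijective hc)),
        ← univ_product_univ, product_val]
      simp [SProd.sprod, Multiset.product, Multiset.map_bind, -Fin.univ_val_map]
    rw [arcMinima, ← ih, huniv, Multiset.map_bind, Multiset.bind_map]
    simp only [Multiset.map_map, Function.comp_def, harc, insertLeast_map_univ_val]

/-! ### Signed generating functions -/

theorem sum_sign_smul_eq_zero {α A : Type*} [Fintype α] [DecidableEq α] [AddCommGroup A]
    {f : Perm α → A} {S : Finset (Perm α)} {a b : α} (hab : a ≠ b)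
    (hS : ∀ π ∈ S, swap a b * π ∈ S) (hf : ∀ π ∈ S, f (swap a b * π) = f π) :
    ∑ π ∈ S, Perm.sign π • f π = 0 := by
  refine sum_involution (fun π _ => swap a b * π) (fun π hπ => ?_) (fun π _ _ h => ?_)
    (fun π hπ => hS π hπ) (fun π _ => by rw [← mul_assoc, swap_mul_self, one_mul])
  · rw [hf π hπ, Perm.sign_mul, Perm.sign_swap hab, neg_one_mul, Units.neg_smul, add_neg_cancel]
  · exact hab (swap_eq_one_iff.1 (mul_eq_right.1 h))

theorem sum_filter_sign_eq_of_sum_eq {α A : Type*} [Fintype α] [DecidableEq α] [AddCommGroup A]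
    [IsAddTorsionFree A] {f g : Perm α → A} (h : ∑ π, f π = ∑ π, g π)
    (hsign : ∑ π, Perm.sign π • f π = ∑ π, Perm.sign π • g π) (ε : ℤˣ) :
    ∑ π with Perm.sign π = ε, f π = ∑ π with Perm.sign π = ε, g π := by
  have two_nsmul_sum (f : Perm α → A) : 2 • ∑ π with Perm.sign π = ε, f π =
      ∑ π, f π + ε • ∑ π, Perm.sign π • f π := by
    rw [sum_filter, smul_sum, smul_sum, ← sum_add_distrib]
    refine sum_congr rfl fun π _ => ?_
    rcases Int.units_eq_one_or (Perm.sign π) with hπ | hπ <;>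
      rcases Int.units_eq_one_or ε with rfl | rfl <;> simp [hπ, two_nsmul]
  apply nsmul_right_injective two_ne_zero
  simp only [two_nsmul_sum, h, hsign]

/-- The behaviour of depth and drop under the operations on the least letters: `s` ignores a least
letter put in front, and exchanging the two least values changes `s` only through the first
letter. -/
structure IsLeastLetterStatistic (s : ∀ {n : ℕ}, Perm (Fin n) → ℕ) : Prop where
  apply_one : s (1 : Perm (Fin 1)) = 0
  apply_extendZero : ∀ {n : ℕ} (e : Perm (Fin n)), s (extendZero e) = s e
  apply_swap_mul : ∀ {n : ℕ} (π : Perm (Fin (n + 2))),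
    s (swap 0 1 * π) + (if π 0 = 1 then 1 else 0) = s π + if π 0 = 0 then 1 else 0

namespace IsLeastLetterStatistic

variable {s : ∀ {n : ℕ}, Perm (Fin n) → ℕ} {R : Type*} [CommRing R]

theorem sum_sign_smul_pow_filter_eq_one (hs : IsLeastLetterStatistic s) (q : R) (n : ℕ) :
    ∑ π : Perm (Fin (n + 2)) with π 0 = 1, Perm.sign π • q ^ s π =
      -q * ∑ π : Perm (Fin (n + 2)) with π 0 = 0, Perm.sign π • q ^ s π := by
  rw [mul_sum]
  refine (sum_equiv (Equiv.mulLeft (swap 0 1)) (fun π => ?_) fun π hπ => ?_).symm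
  · simp [Equiv.swap_apply_eq_iff]
  · have h0 : π 0 = 0 := by simpa using hπ
    have hswap : s (swap 0 1 * π) = s π + 1 := by simpa [h0] using hs.apply_swap_mul π
    rw [coe_mulLeft, hswap, Perm.sign_mul, Perm.sign_swap zero_ne_one, neg_one_mul, Units.neg_smul,
      pow_succ', mul_smul_comm, neg_mul, smul_neg]

theorem sum_sign_smul_pow_succ (hs : IsLeastLetterStatistic s) (q : R) (n : ℕ) :
    ∑ π : Perm (Fin (n + 2)), Perm.sign π • q ^ s π =
      (1 - q) * ∑ e : Perm (Fin (n + 1)), Perm.sign e • q ^ s e := by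
  have hzero : ∑ π : Perm (Fin (n + 2)) with π 0 = 0, Perm.sign π • q ^ s π =
      ∑ e : Perm (Fin (n + 1)), Perm.sign e • q ^ s e := by
    simp only [sum_filter_apply_zero_eq_zero, sign_extendZero, hs.apply_extendZero]
  have hother (j : Fin n) :
      ∑ π : Perm (Fin (n + 2)) with π 0 = j.succ.succ, Perm.sign π • q ^ s π = 0 := by
    have hj1 : j.succ.succ ≠ 1 :=
      Fin.succ_zero_eq_one ▸ (Fin.succ_injective _).ne (Fin.succ_ne_zero j)
    refine sum_sign_smul_eq_zero (zero_ne_one' (Fin (n + 2))) (fun π hπ => ?_) fun π hπ => ?_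
    · have hπ0 : π 0 = j.succ.succ := by simpa using hπ
      simp [hπ0, swap_apply_of_ne_of_ne (Fin.succ_ne_zero _) hj1]
    · have hπ0 : π 0 = j.succ.succ := by simpa using hπ
      have hswap := hs.apply_swap_mul π
      rw [hπ0, if_neg hj1, if_neg (Fin.succ_ne_zero _)] at hswap
      exact congrArg (q ^ ·) hswap
  rw [← sum_fiberwise univ (fun π : Perm (Fin (n + 2)) => π 0), Fin.sum_univ_succ,
    Fin.sum_univ_succ, sum_eq_zero fun j _ => hother j, add_zero, Fin.succ_zero_eq_one,
    hs.sum_sign_smul_pow_filter_eq_one, hzero]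
  ring

theorem sum_sign_smul_pow (hs : IsLeastLetterStatistic s) (q : R) (n : ℕ) :
    ∑ π : Perm (Fin (n + 1)), Perm.sign π • q ^ s π = (1 - q) ^ n := by
  induction n with
  | zero =>
    change ∑ π : Perm (Fin 1), _ = _
    rw [Fintype.sum_subsingleton _ 1, hs.apply_one, Perm.sign_one, pow_zero, one_smul, pow_zero]
  | succ n ih => rw [hs.sum_sign_smul_pow_succ, ih, pow_succ']

end IsLeastLetterStatistic

/-! ### One-line notation -/

theorem oneLine_val_add_one {n : ℕ} (π : Perm (Fin n)) (i : Fin n) :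
    oneLine π (i + 1) = π i + 1 := by
  simp [oneLine]

theorem oneLine_add_one_of_le {n : ℕ} (π : Perm (Fin n)) {k : ℕ} (hk : n ≤ k) :
    oneLine π (k + 1) = k + 1 :=
  dif_neg (by omega)

theorem oneLine_pos {n : ℕ} (π : Perm (Fin n)) {k : ℕ} (hk : 0 < k) : 0 < oneLine π k := by
  unfold oneLine
  split_ifs <;> omega

theorem oneLine_add_one_eq_one_iff {n : ℕ} (π : Perm (Fin (n + 1))) (k : ℕ) :
    oneLine π (k + 1) = 1 ↔ k = (π.symm 0 : Fin (n + 1)) := by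
  rcases lt_or_ge k (n + 1) with hk | hk
  · lift k to Fin (n + 1) using hk
    rw [oneLine_val_add_one, Nat.add_eq_right, Fin.val_eq_zero_iff, Fin.val_inj, eq_symm_apply]
  · rw [oneLine_add_one_of_le π hk]
    omega

theorem oneLine_one_eq_one_iff {n : ℕ} (π : Perm (Fin (n + 1))) : oneLine π 1 = 1 ↔ π 0 = 0 := by
  rw [oneLine_add_one_eq_one_iff π 0, eq_comm, Fin.val_eq_zero_iff, symm_apply_eq, eq_comm]

theorem max_oneLine_swap_mul {n : ℕ} (π : Perm (Fin (n + 2))) (k : ℕ) :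
    max (oneLine (swap 0 1 * π) k) 2 = max (oneLine π k) 2 := by
  unfold oneLine
  split_ifs
  · rw [Perm.mul_apply, swap_apply_def]
    split_ifs with h h <;> simp [h]
  · rfl

theorem sum_Icc_one_eq_sum_fin {A : Type*} [AddCommMonoid A] (n : ℕ) (f : ℕ → A) :
    ∑ i ∈ Icc 1 n, f i = ∑ i : Fin n, f (i + 1) := by
  rw [Fin.sum_univ_eq_sum_range (fun i => f (i + 1)), range_eq_Ico, sum_Ico_add' f 0 n 1]
  rfl

theorem sum_oneLine {n : ℕ} (π : Perm (Fin n)) :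
    ∑ i : Fin n, oneLine π (i + 1) = ∑ i ∈ Icc 1 n, i := by
  simp only [oneLine_val_add_one, sum_Icc_one_eq_sum_fin]
  exact Equiv.sum_comp π fun i : Fin n => (i : ℕ) + 1

theorem invNum_eq_sum {n : ℕ} (π : Perm (Fin n)) :
    invNum π = ∑ i, ∑ j ∈ Ioi i, if π j < π i then 1 else 0 := by
  rw [invNum, card_filter, sum_product, sum_Icc_one_eq_sum_fin]
  refine sum_congr rfl fun i _ => ?_
  rw [sum_Icc_one_eq_sum_fin, ← filter_lt_eq_Ioi, sum_filter]
  simp [oneLine_val_add_one, ite_and]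

theorem neg_one_pow_invNum {n : ℕ} (π : Perm (Fin n)) : (-1) ^ invNum π = Perm.sign π := by
  rw [invNum_eq_sum, Perm.sign_eq_prod_prod_Ioi, ← prod_pow_eq_pow_sum]
  refine prod_congr rfl fun i _ => ?_
  rw [← prod_pow_eq_pow_sum]
  refine prod_congr rfl fun j hj => ?_
  rcases lt_or_gt_of_ne (π.injective.ne (mem_Ioi.1 hj).ne) with h | h <;> simp [h, h.not_gt]

/-- The right-hand side depends on whether a value is `1` or `2` only through its last term. -/
theorem tsub_eq_max_two_tsub_max_two_add {a b : ℕ} (ha : 0 < a) (hb : 0 < b) :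
    a - b = max a 2 - max b 2 + if b = 1 ∧ a ≠ 1 then 1 else 0 := by
  split_ifs <;> omega

/-! ### Depth -/

/-- The minimum of the arc from `i + 1` to `π(i + 1)`. -/
def cycleArcMin {n : ℕ} (π : Perm (Fin n)) (i : Fin n) : ℕ :=
  min (i + 1) (oneLine π (i + 1))

theorem cycleArcMin_eq {n : ℕ} (π : Perm (Fin n)) (i : Fin n) :
    cycleArcMin π i = min (i : ℕ) (π i) + 1 := by
  rw [cycleArcMin, oneLine_val_add_one, Nat.add_min_add_right]

theorem depthStat_eq_sum {n : ℕ} (π : Perm (Fin n)) :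
    depthStat π = ∑ i : Fin n, (oneLine π (i + 1) - (i + 1)) := by
  rw [depthStat, sum_filter_of_ne fun i _ h => by omega, sum_Icc_one_eq_sum_fin]

theorem depthStat_add_sum_cycleArcMin {n : ℕ} (π : Perm (Fin n)) :
    depthStat π + ∑ i, cycleArcMin π i = ∑ i ∈ Icc 1 n, i := by
  rw [depthStat_eq_sum, ← sum_add_distrib, ← sum_oneLine π]
  refine sum_congr rfl fun i _ => ?_
  rw [cycleArcMin]
  omega

theorem map_cycleArcMin_extendZero_mul_swap {n : ℕ} (e : Perm (Fin n)) (p : Fin (n + 1)) :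
    univ.val.map (cycleArcMin (extendZero e * swap 0 p)) =
      1 ::ₘ univ.val.map fun i => if p = i.succ then 1 else cycleArcMin e i + 1 := by
  rw [Fin.univ_succ, cons_val, Multiset.map_cons, map_val, Multiset.map_map]
  refine congrArg₂ Multiset.cons ?_ (Multiset.map_congr rfl fun i _ => ?_)
  · simp [cycleArcMin_eq]
  by_cases h : p = i.succ
  · simp [cycleArcMin_eq, h]
  · simp [cycleArcMin_eq, h, swap_apply_of_ne_of_ne (Fin.succ_ne_zero i) (Ne.symm h)]

theorem map_cycleArcMin (n : ℕ) :
    univ.val.map (fun π : Perm (Fin n) => univ.val.map (cycleArcMin π)) = arcMinima n :=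
  map_univ_val_eq_arcMinima cycleArcMin (swap 0) (swap_apply_right 0)
    map_cycleArcMin_extendZero_mul_swap n

theorem depthStat_eq_sum_max_add {n : ℕ} (π : Perm (Fin (n + 1))) :
    depthStat π = ∑ i : Fin (n + 1), (max (oneLine π (i + 1)) 2 - max (i + 1 : ℕ) 2) +
      if π 0 = 0 then 0 else 1 := by
  rw [depthStat_eq_sum, sum_congr rfl fun i _ =>
    tsub_eq_max_two_tsub_max_two_add (oneLine_pos π i.val.succ_pos) i.val.succ_pos, sum_add_distrib]
  congr 1
  rw [Fintype.sum_eq_single 0 fun i hi => if_neg (by simpa using fun h => (hi h).elim)]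
  simp [oneLine_one_eq_one_iff]

theorem isLeastLetterStatistic_depthStat : IsLeastLetterStatistic depthStat where
  apply_one := rfl
  apply_extendZero e := by
    simp [depthStat_eq_sum, Fin.sum_univ_succ, oneLine_val_add_one]
  apply_swap_mul π := by
    simp only [depthStat_eq_sum_max_add, max_oneLine_swap_mul, Perm.mul_apply, swap_apply_eq_iff]
    grind

/-! ### Drop -/

/-- The minimum of the letters at places `i + 1` and `i + 2` of the word `π`. Beyond the end of the
word `oneLine` supplies the letter `n + 1`, so that the last letter has an arc as well. -/
def wordArcMin {n : ℕ} (π : Perm (Fin n)) (i : Fin n) : ℕ :=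
  min (oneLine π (i + 1)) (oneLine π (i + 2))

theorem drpStat_eq_sum {n : ℕ} (π : Perm (Fin n)) :
    drpStat π = ∑ i : Fin n, (oneLine π (i + 1) - oneLine π (i + 2)) := by
  rw [drpStat, sum_filter_of_ne fun i _ h => by omega, sum_Icc_one_eq_sum_fin]
  cases n with
  | zero => rfl
  | succ n =>
    have hlast : oneLine π (Fin.last n + 1) - oneLine π (Fin.last n + 2) = 0 := by
      rw [oneLine_val_add_one, oneLine_add_one_of_le π (by simp)]
      exact Nat.sub_eq_zero_of_le (by simp)
    rw [Fin.sum_univ_castSucc, hlast]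
    rfl

theorem drpStat_add_sum_wordArcMin {n : ℕ} (π : Perm (Fin n)) :
    drpStat π + ∑ i, wordArcMin π i = ∑ i ∈ Icc 1 n, i := by
  rw [drpStat_eq_sum, ← sum_add_distrib, ← sum_oneLine π]
  refine sum_congr rfl fun i _ => ?_
  rw [wordArcMin]
  omega

theorem oneLine_extendZero_mul_cycleRange_of_lt {n : ℕ} (e : Perm (Fin n)) {p : Fin (n + 1)} {k : ℕ}
    (hk : k < p) : oneLine (extendZero e * p.cycleRange) (k + 1) = oneLine e (k + 1) + 1 := by
  lift k to Fin n using by omega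
  have hcast : p.succAbove k = k.castSucc := Fin.succAbove_of_castSucc_lt _ _ hk
  rw [← Fin.val_castSucc, oneLine_val_add_one, ← hcast, Perm.mul_apply, Fin.cycleRange_succAbove,
    extendZero_apply_succ, Fin.val_succ, hcast, Fin.val_castSucc, oneLine_val_add_one]

theorem oneLine_extendZero_mul_cycleRange_self {n : ℕ} (e : Perm (Fin n)) (p : Fin (n + 1)) :
    oneLine (extendZero e * p.cycleRange) (p + 1) = 1 := by
  simp [oneLine_val_add_one]

theorem oneLine_extendZero_mul_cycleRange_of_ge {n : ℕ} (e : Perm (Fin n)) {p : Fin (n + 1)} {k : ℕ}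
    (hk : p ≤ k) : oneLine (extendZero e * p.cycleRange) (k + 2) = oneLine e (k + 1) + 1 := by
  rcases lt_or_ge k n with hn | hn
  · lift k to Fin n using hn
    have hsucc : p.succAbove k = k.succ := Fin.succAbove_of_le_castSucc _ _ hk
    change oneLine _ (k.succ + 1) = _
    rw [oneLine_val_add_one, ← hsucc, Perm.mul_apply, Fin.cycleRange_succAbove,
      extendZero_apply_succ, Fin.val_succ, oneLine_val_add_one]
  · rw [oneLine_add_one_of_le _ (Nat.succ_le_succ hn), oneLine_add_one_of_le e hn]

theorem wordArcMin_extendZero_mul_cycleRange_self {n : ℕ} (e : Perm (Fin n)) (p : Fin (n + 1)) :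
    wordArcMin (extendZero e * p.cycleRange) p = 1 := by
  rw [wordArcMin, oneLine_extendZero_mul_cycleRange_self]
  exact min_eq_left (oneLine_pos _ (Nat.succ_pos _))

theorem wordArcMin_extendZero_mul_cycleRange_succAbove {n : ℕ} (e : Perm (Fin n)) (p : Fin (n + 1))
    (i : Fin n) : wordArcMin (extendZero e * p.cycleRange) (p.succAbove i) =
      if p = i.succ then 1 else wordArcMin e i + 1 := by
  unfold wordArcMin
  rcases lt_or_ge i.castSucc p with h | h
  · have hi : (i : ℕ) < p := h
    rw [Fin.succAbove_of_castSucc_lt _ _ h, Fin.val_castSucc,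
      oneLine_extendZero_mul_cycleRange_of_lt e hi]
    split_ifs with hp
    · have hself := oneLine_extendZero_mul_cycleRange_self e p
      nth_rw 2 [hp] at hself
      rw [Fin.val_succ] at hself
      rw [hself]
      exact min_eq_right (Nat.succ_pos _)
    · have hlt : (i : ℕ) + 1 < p := lt_of_le_of_ne hi fun h' => hp (Fin.ext h'.symm)
      rw [oneLine_extendZero_mul_cycleRange_of_lt e hlt, Nat.add_min_add_right]
  · have hi : p ≤ (i : ℕ) := h
    have hp : p ≠ i.succ := (h.trans_lt i.castSucc_lt_succ).ne
    rw [if_neg hp, Fin.succAbove_of_le_castSucc _ _ h, Fin.val_succ,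
      oneLine_extendZero_mul_cycleRange_of_ge e hi,
      oneLine_extendZero_mul_cycleRange_of_ge e (Nat.le_succ_of_le hi), Nat.add_min_add_right]

theorem map_wordArcMin_extendZero_mul_cycleRange {n : ℕ} (e : Perm (Fin n)) (p : Fin (n + 1)) :
    univ.val.map (wordArcMin (extendZero e * p.cycleRange)) =
      1 ::ₘ univ.val.map fun i => if p = i.succ then 1 else wordArcMin e i + 1 := by
  rw [Fin.univ_succAbove n p, cons_val, Multiset.map_cons, map_val, Multiset.map_map]
  exact congrArg₂ Multiset.cons (wordArcMin_extendZero_mul_cycleRange_self e p)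
    (Multiset.map_congr rfl fun i _ => wordArcMin_extendZero_mul_cycleRange_succAbove e p i)

theorem map_wordArcMin (n : ℕ) :
    univ.val.map (fun π : Perm (Fin n) => univ.val.map (wordArcMin π)) = arcMinima n :=
  map_univ_val_eq_arcMinima wordArcMin Fin.cycleRange Fin.cycleRange_self
    map_wordArcMin_extendZero_mul_cycleRange n

theorem drpStat_eq_sum_max_add {n : ℕ} (π : Perm (Fin (n + 1))) :
    drpStat π = ∑ i : Fin (n + 1), (max (oneLine π (i + 1)) 2 - max (oneLine π (i + 2)) 2) +
      if π 0 = 0 then 0 else 1 := by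
  rw [drpStat_eq_sum, sum_congr rfl fun (i : Fin (n + 1)) _ => tsub_eq_max_two_tsub_max_two_add
    (oneLine_pos π i.val.succ_pos) (oneLine_pos π (k := i + 2) (by omega)), sum_add_distrib]
  congr 1
  have hiff (i : Fin (n + 1)) : oneLine π (i + 2) = 1 ∧ oneLine π (i + 1) ≠ 1 ↔
      (i + 1 : ℕ) = (π.symm 0 : Fin (n + 1)) := by
    rw [oneLine_add_one_eq_one_iff π (i + 1), Ne, oneLine_add_one_eq_one_iff]
    omega
  have hzero : π 0 = 0 ↔ π.symm 0 = 0 := by rw [symm_apply_eq, eq_comm]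
  simp only [hiff, hzero]
  cases π.symm 0 using Fin.cases with
  | zero => simp
  | succ j =>
    rw [Fintype.sum_eq_single j.castSucc fun i hi => if_neg (by simpa [Fin.ext_iff] using hi)]
    simp

theorem drpStat_extendZero {n : ℕ} (e : Perm (Fin n)) : drpStat (extendZero e) = drpStat e := by
  have hone : oneLine (extendZero e) 1 = 1 := by simp [oneLine_one_eq_one_iff]
  have hsucc (k : ℕ) : oneLine (extendZero e) (k + 2) = oneLine e (k + 1) + 1 := by
    simpa using oneLine_extendZero_mul_cycleRange_of_ge e (p := 0) (Nat.zero_le k)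
  rw [drpStat_eq_sum, drpStat_eq_sum, Fin.sum_univ_succ, Fin.val_zero, hsucc, zero_add, hone]
  simp [hsucc]

theorem isLeastLetterStatistic_drpStat : IsLeastLetterStatistic drpStat where
  apply_one := rfl
  apply_extendZero := drpStat_extendZero
  apply_swap_mul π := by
    simp only [drpStat_eq_sum_max_add, max_oneLine_swap_mul, Perm.mul_apply, swap_apply_eq_iff]
    grind

/-! ### Equidistribution -/

theorem map_depthStat_eq_map_drpStat (n : ℕ) :
    univ.val.map (fun π : Perm (Fin n) => depthStat π) =
      univ.val.map fun π : Perm (Fin n) => drpStat π := by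
  have hdepth (π : Perm (Fin n)) :
      depthStat π = (∑ i ∈ Icc 1 n, i) - (univ.val.map (cycleArcMin π)).sum :=
    Nat.eq_sub_of_add_eq (depthStat_add_sum_cycleArcMin π)
  have hdrp (π : Perm (Fin n)) :
      drpStat π = (∑ i ∈ Icc 1 n, i) - (univ.val.map (wordArcMin π)).sum :=
    Nat.eq_sub_of_add_eq (drpStat_add_sum_wordArcMin π)
  have harc := congrArg (Multiset.map fun M => (∑ i ∈ Icc 1 n, i) - M.sum)
    ((map_cycleArcMin n).trans (map_wordArcMin n).symm)
  rw [Multiset.map_map, Multiset.map_map] at harc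
  rwa [Multiset.map_congr rfl fun π _ => hdepth π, Multiset.map_congr rfl fun π _ => hdrp π]

theorem sum_pow_depthStat_eq_sum_pow_drpStat {R : Type*} [Semiring R] (q : R) (n : ℕ) :
    ∑ π : Perm (Fin n), q ^ depthStat π = ∑ π : Perm (Fin n), q ^ drpStat π := by
  have h := congrArg (fun M => (M.map (q ^ ·)).sum) (map_depthStat_eq_map_drpStat n)
  rwa [Multiset.map_map, Multiset.map_map] at h

theorem sum_filter_sign_pow_depthStat_eq {R : Type*} [CommRing R] [IsAddTorsionFree R] (q : R)
    (n : ℕ) (ε : ℤˣ) :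
    ∑ π : Perm (Fin (n + 1)) with Perm.sign π = ε, q ^ depthStat π =
      ∑ π : Perm (Fin (n + 1)) with Perm.sign π = ε, q ^ drpStat π := by
  refine sum_filter_sign_eq_of_sum_eq (sum_pow_depthStat_eq_sum_pow_drpStat q (n + 1)) ?_ ε
  rw [isLeastLetterStatistic_depthStat.sum_sign_smul_pow,
    isLeastLetterStatistic_drpStat.sum_sign_smul_pow]

end

/-- the distributions of depth and drp agree on the alternating group
and on its complement. -/
theorem stmt18 (n : ℕ) (hn : 0 < n) :
    ((∑ π ∈ Finset.univ.filter (fun π : Equiv.Perm (Fin n) => (-1 : ℤ) ^ invNum π = 1),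
        (Polynomial.X : Polynomial ℤ) ^ depthStat π) =
      ∑ π ∈ Finset.univ.filter (fun π : Equiv.Perm (Fin n) => (-1 : ℤ) ^ invNum π = 1),
        (Polynomial.X : Polynomial ℤ) ^ drpStat π) ∧
    ((∑ π ∈ Finset.univ.filter (fun π : Equiv.Perm (Fin n) => (-1 : ℤ) ^ invNum π = -1),
        (Polynomial.X : Polynomial ℤ) ^ depthStat π) =
      ∑ π ∈ Finset.univ.filter (fun π : Equiv.Perm (Fin n) => (-1 : ℤ) ^ invNum π = -1),
        (Polynomial.X : Polynomial ℤ) ^ drpStat π) := by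
  obtain ⟨m, rfl⟩ := Nat.exists_eq_succ_of_ne_zero hn.ne'
  have hsign (ε : ℤˣ) (π : Equiv.Perm (Fin (m + 1))) :
      (-1 : ℤ) ^ invNum π = ε ↔ Equiv.Perm.sign π = ε := by
    rw [← neg_one_pow_invNum, ← Units.val_inj, Units.val_pow_eq_pow_val, Units.val_neg,
      Units.val_one]
  have h (ε : ℤˣ) := sum_filter_sign_pow_depthStat_eq (Polynomial.X : Polynomial ℤ) m ε
  simp only [← hsign] at h
  exact ⟨h 1, h (-1)⟩
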